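/- Let C ∈ M_n(ℂ) (n ≥ 2) be a circulant matrix and let Λ be the multiset of eigenvalues of C, counted with multiplicity. Then for every i ∈ {1,…,n}, the multiset of eigenvalues (with multiplicity) of the principal submatrix C_{(i)} obtained by deleting the i-th row and i-th column of C equals the multiset Λ' of critical points of Λ. -/

import Mathlib

open Polynomial

/-- The embedding Fin (n-1) → Fin n skipping index i. -/
def delIdx {n : ℕ} (i : Fin n) (j : Fin (n - 1)) : Fin n :=
  if h : (j : ℕ) < (i : ℕ) then ⟨j, by have := i.isLt; omega⟩
  else ⟨(j : ℕ) + 1, by have := j.isLt; have := i.isLt; omega⟩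

/-- The principal submatrix of A obtained by deleting the i-th row and column. -/
def delSub {n : ℕ} {R : Type*} (A : Matrix (Fin n) (Fin n) R) (i : Fin n) :
    Matrix (Fin (n - 1)) (Fin (n - 1)) R :=
  A.submatrix (delIdx i) (delIdx i)

/-!
By Jacobi's formula, the derivative of the characteristic polynomial of a matrix is the sum of the
characteristic polynomials of its principal submatrices with one row and column deleted. The
entries of a circulant matrix are unchanged when the indices are shifted cyclically, and the shifts
act transitively, so all these submatrices have the same characteristic polynomial. Hence
`χ_C' = n χ_{C_(i)}`, and both sides have the same roots.
-/

section Derivative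

variable {R ι : Type*} [CommRing R] [Fintype ι] [DecidableEq ι]

theorem derivative_det_eq_sum_det_updateRow (M : Matrix ι ι R[X]) :
    derivative M.det = ∑ i, (M.updateRow i fun j => derivative (M i j)).det := by
  have derivative_term (σ : Equiv.Perm ι) :
      derivative (∏ i, M i (σ i)) =
        ∑ i, ∏ k, M.updateRow i (fun j => derivative (M i j)) k (σ k) := by
    rw [derivative_prod_finset]
    refine Finset.sum_congr rfl fun i _ => ?_
    rw [← Finset.prod_erase_mul _ _ (Finset.mem_univ i), Matrix.updateRow_self]
    congr 1
    refine Finset.prod_congr rfl fun k hk => ?_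
    rw [Matrix.updateRow_ne (Finset.ne_of_mem_erase hk)]
  simp_rw [← Matrix.det_transpose (Matrix.updateRow _ _ _), ← Matrix.det_transpose M,
    Matrix.det_apply, Matrix.transpose_apply, derivative_sum, Units.smul_def, derivative_smul,
    derivative_term, Finset.smul_sum]
  exact Finset.sum_comm

theorem derivative_charpoly_eq_trace_adjugate (A : Matrix ι ι R) :
    derivative A.charpoly = A.charmatrix.adjugate.trace := by
  have derivative_row (i : ι) :
      (fun j => derivative (A.charmatrix i j)) = Pi.single i 1 := by
    ext1 j
    obtain rfl | hij := eq_or_ne i j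
    · simp
    · simp [hij, hij.symm]
  rw [Matrix.charpoly, derivative_det_eq_sum_det_updateRow]
  simp_rw [derivative_row, Matrix.trace, Matrix.diag_apply, Matrix.adjugate_apply]

end Derivative

section PrincipalSubmatrix

theorem charmatrix_submatrix {R ι κ : Type*} [CommRing R] [Fintype ι] [DecidableEq ι] [Fintype κ]
    [DecidableEq κ] (A : Matrix ι ι R) {e : κ → ι} (he : Function.Injective e) :
    (A.submatrix e e).charmatrix = A.charmatrix.submatrix e e := by
  ext1 j k
  simp [Matrix.charmatrix_apply, Matrix.diagonal_apply, he.eq_iff]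

theorem delIdx_eq_succAbove {m : ℕ} (i : Fin (m + 1)) :
    delIdx i = i.succAbove := by
  ext j
  simp only [delIdx, Fin.succAbove, Fin.lt_def, Fin.val_castSucc]
  split_ifs <;> simp

variable {R : Type*} [CommRing R] {n : ℕ}

theorem charpoly_delSub (A : Matrix (Fin n) (Fin n) R) (i : Fin n) :
    (delSub A i).charpoly = A.charmatrix.adjugate i i := by
  cases n with
  | zero => exact i.elim0
  | succ m =>
    rw [Matrix.adjugate_fin_succ_eq_det_submatrix, Even.neg_one_pow ⟨_, rfl⟩, one_mul,
      ← charmatrix_submatrix A i.succAbove_right_injective, ← delIdx_eq_succAbove]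
    rfl

theorem derivative_charpoly_eq_sum_charpoly_delSub (A : Matrix (Fin n) (Fin n) R) :
    derivative A.charpoly = ∑ i, (delSub A i).charpoly := by
  simp only [derivative_charpoly_eq_trace_adjugate, charpoly_delSub, Matrix.trace,
    Matrix.diag_apply]

theorem charpoly_delSub_apply_of_submatrix_eq {A : Matrix (Fin n) (Fin n) R}
    {σ : Equiv.Perm (Fin n)} (hσ : A.submatrix σ σ = A) (i : Fin n) :
    (delSub A (σ i)).charpoly = (delSub A i).charpoly := by
  have adjugate_invariant : A.charmatrix.adjugate.submatrix σ σ = A.charmatrix.adjugate := by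
    rw [← Matrix.adjugate_submatrix_equiv_self, ← charmatrix_submatrix A σ.injective, hσ]
  rw [charpoly_delSub, charpoly_delSub]
  exact congr_fun₂ adjugate_invariant i i

end PrincipalSubmatrix

/-- A square matrix is *index-transitive* if the permutations of the index set that preserve it,
applied simultaneously to rows and columns, act transitively. For the adjacency matrix of a graph
this is vertex-transitivity. -/
def IsIndexTransitive {R ι : Type*} (A : Matrix ι ι R) : Prop :=
  ∀ i j, ∃ σ : Equiv.Perm ι, A.submatrix σ σ = A ∧ σ i = j

theorem isIndexTransitive_of_apply_eq_sub {R G : Type*} [AddGroup G] {A : Matrix G G R} {c : G → R}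
    (hA : ∀ j k, A j k = c (k - j)) : IsIndexTransitive A := by
  refine fun i j => ⟨Equiv.addRight (-i + j), ?_, by simp⟩
  ext k l
  simp only [Matrix.submatrix_apply, Equiv.coe_addRight, hA, add_sub_add_right_eq_sub]

theorem IsIndexTransitive.derivative_charpoly {R : Type*} [CommRing R] {n : ℕ}
    {A : Matrix (Fin n) (Fin n) R} (hA : IsIndexTransitive A) (i : Fin n) :
    derivative A.charpoly = C (n : R) * (delSub A i).charpoly := by
  have charpoly_delSub_eq (j : Fin n) : (delSub A j).charpoly = (delSub A i).charpoly := by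
    obtain ⟨σ, hσ, rfl⟩ := hA i j
    exact charpoly_delSub_apply_of_submatrix_eq hσ i
  simp [derivative_charpoly_eq_sum_charpoly_delSub, charpoly_delSub_eq]

theorem circulant_principal_submatrix_general {R : Type*} [CommRing R] [IsDomain R] {n : ℕ}
    (hn : (n : R) ≠ 0) (A : Matrix (Fin n) (Fin n) R) (hA : IsIndexTransitive A)
    (hsplits : A.charpoly.Splits) (Λ : Multiset R) (hΛ : Λ = A.charpoly.roots)
    (p : R[X]) (hp : p = (Λ.map fun l => X - C l).prod) (i : Fin n) :
    (delSub A i).charpoly.roots = p.derivative.roots := by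
  have p_eq_charpoly : p = A.charpoly := by
    rw [hp, hΛ, ← hsplits.eq_prod_roots_of_monic A.charpoly_monic]
  rw [p_eq_charpoly, hA.derivative_charpoly i, roots_C_mul _ hn]

/-- if A is an n-by-n circulant matrix with spectrum Λ (the multiset
of roots of its characteristic polynomial), then for every i the spectrum of the
principal submatrix A_{(i)} is the multiset of critical points of Λ. -/
theorem circulant_principal_submatrix (n : ℕ) (hn : 2 ≤ n)
    (A : Matrix (Fin n) (Fin n) ℂ)
    (hcirc : ∃ c : Fin n → ℂ, ∀ j k, A j k = c (k - j))
    (Λ : Multiset ℂ) (hΛ : Λ = A.charpoly.roots)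
    (p : Polynomial ℂ) (hp : p = (Λ.map fun l => X - C l).prod) :
    ∀ i, (delSub A i).charpoly.roots = p.derivative.roots := by
  obtain ⟨c, hc⟩ := hcirc
  have : NeZero n := ⟨by lia⟩
  exact circulant_principal_submatrix_general (NeZero.ne _) A (isIndexTransitive_of_apply_eq_sub hc)
    (IsAlgClosed.splits _) Λ hΛ p hp
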